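/- Let g be a smooth Riemannian metric on E = ℝ² \ B̄(0,1) that is asymptotic to the flat cone metric of parameter P > 0 in the sense that g − g_cone ∈ O₂((x²+y²)^{−ε}) for some ε > 0. Then there exists R₀ > 1 such that for all R ≥ R₀, the circle γ_R = {x² + y² = R²}, oriented with inward normal pointing toward the origin, has strictly positive geodesic curvature with respect to g at every point. -/

import Mathlib

open Real MeasureTheory Filter Topology Matrix
open scoped BigOperators

noncomputable section

/-- Points of the plane. -/
abbrev Pt := ℝ × ℝ

/-- A (coordinate expression of a) metric on (a subset of) the plane:
a field of `2 × 2` matrices. -/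
abbrev Met := Pt → Matrix (Fin 2) (Fin 2) ℝ

/-- Euclidean radius of a point of the plane. -/
def rad (p : Pt) : ℝ := Real.sqrt (p.1 ^ 2 + p.2 ^ 2)

/-- The standard coordinate directions. -/
def e2 : Fin 2 → Pt := ![(1, 0), (0, 1)]

/-- Partial derivative in the `i`-th coordinate direction. -/
def pd (i : Fin 2) (f : Pt → ℝ) (p : Pt) : ℝ := fderiv ℝ f p (e2 i)

/-- Second partial derivatives. -/
def pd2 (i j : Fin 2) (f : Pt → ℝ) (p : Pt) : ℝ := pd i (fun q => pd j f q) p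

/-- Christoffel symbols `Γ^k_{ij}` of the Levi-Civita connection of `g`. -/
def christoffel (g : Met) (k i j : Fin 2) (p : Pt) : ℝ :=
  (1 / 2) * ∑ l : Fin 2, (g p)⁻¹ k l *
    (pd i (fun q => g q l j) p + pd j (fun q => g q l i) p - pd l (fun q => g q i j) p)

/-- Curvature tensor `R^l_{ijk}` of the Levi-Civita connection of `g`. -/
def riem (g : Met) (l i j k : Fin 2) (p : Pt) : ℝ :=
  pd i (fun q => christoffel g l j k q) p - pd j (fun q => christoffel g l i k q) p
    + ∑ m : Fin 2, (christoffel g l i m p * christoffel g m j k p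
        - christoffel g l j m p * christoffel g m i k p)

/-- Gaussian curvature `K = R_{0101} / det g`. -/
def gaussCurv (g : Met) (p : Pt) : ℝ :=
  (∑ l : Fin 2, g p 0 l * riem g l 1 0 1 p) / (g p).det

/-- Scalar curvature of a two-dimensional metric: twice the Gaussian curvature. -/
def scalCurv (g : Met) (p : Pt) : ℝ := 2 * gaussCurv g p

/-- The inner product of two tangent vectors with respect to `g` at `p`. -/
def innerG (g : Met) (p : Pt) (u v : Fin 2 → ℝ) : ℝ :=
  ∑ i : Fin 2, ∑ j : Fin 2, g p i j * u i * v j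

/-- The length of a tangent vector with respect to `g` at `p`. -/
def normG (g : Met) (p : Pt) (u : Fin 2 → ℝ) : ℝ := Real.sqrt (innerG g p u u)

/-- Velocity (coordinate derivative) of a curve in the plane. -/
def vel (c : ℝ → Pt) (t : ℝ) : Fin 2 → ℝ :=
  ![deriv (fun s => (c s).1) t, deriv (fun s => (c s).2) t]

/-- Covariant acceleration `(∇_{c'} c')^k` of a curve with respect to `g`. -/
def accel (g : Met) (c : ℝ → Pt) (t : ℝ) : Fin 2 → ℝ := fun k =>
  deriv (fun s => vel c s k) t
    + ∑ i : Fin 2, ∑ j : Fin 2, christoffel g k i j (c t) * vel c t i * vel c t j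

/-- Rotation by 90 degrees with respect to the metric `g` and the standard
orientation of the plane (`g(Ju, v) = ω(u, v)` for the Riemannian area form `ω`),
with the sign convention making the outward-oriented Euclidean circle have
geodesic curvature `+1/R`. -/
def Jrot (g : Met) (p : Pt) (u : Fin 2 → ℝ) : Fin 2 → ℝ := fun i =>
  Real.sqrt (g p).det * ∑ k : Fin 2, (g p)⁻¹ i k * (if k = 0 then -u 1 else u 0)

/-- Geodesic curvature of a curve `c` at time `t` with respect to `g`. -/
def geodCurv (g : Met) (c : ℝ → Pt) (t : ℝ) : ℝ :=
  innerG g (c t) (accel g c t) (Jrot g (c t) (vel c t)) / (normG g (c t) (vel c t)) ^ 3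

/-- Speed of a curve with respect to `g`. -/
def speedG (g : Met) (c : ℝ → Pt) (t : ℝ) : ℝ := normG g (c t) (vel c t)

/-- Total geodesic curvature `∫ κ ds` of a curve over the parameter range `[a,b]`. -/
def totalGeodCurv (g : Met) (c : ℝ → Pt) (a b : ℝ) : ℝ :=
  ∫ t in a..b, geodCurv g c t * speedG g c t

/-- The length of a curve with respect to `g`. -/
def lengthG (g : Met) (c : ℝ → Pt) (a b : ℝ) : ℝ := ∫ t in a..b, speedG g c t

/-- The "quasilocal mass" of a loop `c` of period `T`: the angle defect
`2π - ∫_γ κ ds` (equivalently, by Gauss–Bonnet, the angle defect of the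
holonomy of parallel transport around the loop). -/
def qlm (g : Met) (c : ℝ → Pt) (T : ℝ) : ℝ := 2 * π - totalGeodCurv g c 0 T

/-- The round circle of radius `R`. -/
def circleC (R : ℝ) : ℝ → Pt := fun t => (R * Real.cos t, R * Real.sin t)

/-- The flat cone metric of parameter `P`, i.e. `dr² + P²r²dθ²`, written in
Cartesian coordinates: `dx² + dy² - ((1-P²)/(x²+y²)) (x dy - y dx)²`. -/
def coneMetric (P : ℝ) : Met := fun p =>
  !![1 - (1 - P ^ 2) * p.2 ^ 2 / (p.1 ^ 2 + p.2 ^ 2),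
      (1 - P ^ 2) * p.1 * p.2 / (p.1 ^ 2 + p.2 ^ 2);
     (1 - P ^ 2) * p.1 * p.2 / (p.1 ^ 2 + p.2 ^ 2),
      1 - (1 - P ^ 2) * p.1 ^ 2 / (p.1 ^ 2 + p.2 ^ 2)]

/-- The flat cylinder metric `dr² + p²dθ²` (cone parameter `P = 0`),
in Cartesian coordinates on the exterior region. -/
def cylMetric (pc : ℝ) : Met := fun q =>
  !![q.1 ^ 2 / (q.1 ^ 2 + q.2 ^ 2) + pc ^ 2 * q.2 ^ 2 / (q.1 ^ 2 + q.2 ^ 2) ^ 2,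
      q.1 * q.2 / (q.1 ^ 2 + q.2 ^ 2) - pc ^ 2 * q.1 * q.2 / (q.1 ^ 2 + q.2 ^ 2) ^ 2;
     q.1 * q.2 / (q.1 ^ 2 + q.2 ^ 2) - pc ^ 2 * q.1 * q.2 / (q.1 ^ 2 + q.2 ^ 2) ^ 2,
      q.2 ^ 2 / (q.1 ^ 2 + q.2 ^ 2) + pc ^ 2 * q.1 ^ 2 / (q.1 ^ 2 + q.2 ^ 2) ^ 2]

/-- The exterior region `ℝ² \ B̄(0,1)`. -/
def ExtSet : Set Pt := {p | 1 < rad p}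

/-- `g` is a smooth Riemannian metric on `U`. -/
def IsMetricOn (g : Met) (U : Set Pt) : Prop :=
  (∀ i j : Fin 2, ContDiffOn ℝ (⊤ : ℕ∞) (fun p => g p i j) U) ∧
    ∀ p ∈ U, (g p).IsSymm ∧ (g p).PosDef

/-- The decay condition `O₂(r^{-2ε})` for a matrix-valued field, beyond radius `R₀`:
`|f| + r|∂f| + r²|∂²f| ≤ C r^{-2ε}`. -/
def IsO2Decay (h : Pt → Matrix (Fin 2) (Fin 2) ℝ) (ε R₀ : ℝ) : Prop :=
  ∃ C > 0, ∀ p : Pt, R₀ < rad p → ∀ i j : Fin 2,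
    |h p i j| + rad p * ∑ k : Fin 2, |pd k (fun q => h q i j) p|
      + rad p ^ 2 * ∑ k : Fin 2, ∑ l : Fin 2, |pd2 k l (fun q => h q i j) p|
      ≤ C * rad p ^ (-(2 * ε))

/-- `V` is a parallel vector field along the curve `c`, for the Levi-Civita
connection of `g`: `dV^k/dt + Γ^k_{ij} (c')^i V^j = 0`. -/
def IsParallel (g : Met) (c : ℝ → Pt) (V : ℝ → Fin 2 → ℝ) : Prop :=
  ∀ t : ℝ, ∀ k : Fin 2,
    deriv (fun s => V s k) t
      + ∑ i : Fin 2, ∑ j : Fin 2, christoffel g k i j (c t) * vel c t i * V t j = 0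

/-- The holonomy of parallel transport of `g` around the loop `c : [0,T]` is
rotation by the angle `α`: in some positively oriented `g`-orthonormal frame at
the base point, parallel transport acts as the rotation matrix of angle `α`. -/
def IsHolonomyRotation (g : Met) (c : ℝ → Pt) (T α : ℝ) : Prop :=
  ∃ u v : Fin 2 → ℝ,
    innerG g (c 0) u u = 1 ∧ innerG g (c 0) v v = 1 ∧ innerG g (c 0) u v = 0 ∧
    0 < u 0 * v 1 - u 1 * v 0 ∧
    ∃ U V : ℝ → Fin 2 → ℝ, IsParallel g c U ∧ IsParallel g c V ∧
      U 0 = u ∧ V 0 = v ∧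
      (U T = fun k => Real.cos α * u k + Real.sin α * v k) ∧
      (V T = fun k => -Real.sin α * u k + Real.cos α * v k)

/-- The loop `c : [0,T]` winds once (positively) around the point `z`. -/
def WindsOnceAround (c : ℝ → Pt) (T : ℝ) (z : Pt) : Prop :=
  ∃ ρ θ : ℝ → ℝ, Continuous ρ ∧ Continuous θ ∧ (∀ t, 0 < ρ t) ∧
    (∀ t, c t - z = (ρ t * Real.cos (θ t), ρ t * Real.sin (θ t))) ∧
    θ T = θ 0 + 2 * π

/-- `c` is a smooth simple closed curve of period `T`. -/
def IsSimpleClosedCurve (c : ℝ → Pt) (T : ℝ) : Prop :=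
  ContDiff ℝ (⊤ : ℕ∞) c ∧ 0 < T ∧ (∀ t, c (t + T) = c t) ∧
    (∀ t, vel c t ≠ 0) ∧ Set.InjOn c (Set.Ico 0 T)


/-- Jacobian matrix `∂F^i/∂x^j` of a map of the plane. -/
def jac (F : Pt → Pt) (p : Pt) : Matrix (Fin 2) (Fin 2) ℝ := fun i j =>
  pd j (fun q => if i = 0 then (F q).1 else (F q).2) p

/-- Pullback `F*h = Jᵀ (h ∘ F) J` of a metric under a map of the plane. -/
def pullMet (F : Pt → Pt) (h : Met) : Met := fun p =>
  (jac F p)ᵀ * h (F p) * jac F p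

/-- A topological surface, possibly with boundary, given by an atlas of charts
into the closed upper half plane, with smooth transition maps. -/
structure Surface0 where
  M : Type
  ts : TopologicalSpace M
  t2 : @T2Space M ts
  charts : Set (PartialHomeomorph M Pt)
  cover : ∀ x : M, ∃ φ ∈ charts, x ∈ φ.source
  target_eq : ∀ φ ∈ charts, ∃ U : Set Pt, IsOpen U ∧ φ.target = U ∩ {p : Pt | 0 ≤ p.2}
  smooth_trans : ∀ φ ∈ charts, ∀ ψ ∈ charts,
    ContDiffOn ℝ (⊤ : ℕ∞) (ψ ∘ φ.symm) (φ.target ∩ φ.symm ⁻¹' ψ.source)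

attribute [instance] Surface0.ts Surface0.t2

/-- A Riemannian surface: a surface together with, in each chart, a coordinate
expression for the metric, compatible under pullback by transition maps. -/
structure Surface extends Surface0 where
  gM : PartialHomeomorph M Pt → Met
  metric : ∀ φ ∈ charts, IsMetricOn (gM φ) φ.target
  compat : ∀ φ ∈ charts, ∀ ψ ∈ charts, ∀ p ∈ φ.target ∩ φ.symm ⁻¹' ψ.source,
    gM φ p = pullMet (ψ ∘ φ.symm) (gM ψ) p

/-- A distinguished chart at each point. -/
def Surface0.chartAt (S : Surface0) (x : S.M) : PartialHomeomorph S.M Pt :=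
  (S.cover x).choose

lemma Surface0.chartAt_mem (S : Surface0) (x : S.M) : S.chartAt x ∈ S.charts :=
  (S.cover x).choose_spec.1

lemma Surface0.mem_chartAt_source (S : Surface0) (x : S.M) : x ∈ (S.chartAt x).source :=
  (S.cover x).choose_spec.2

/-- The Gaussian curvature of a Riemannian surface, computed in a chart. -/
def Surface.curv (S : Surface) (x : S.M) : ℝ :=
  gaussCurv (S.gM (S.chartAt x)) (S.chartAt x x)

/-- The scalar curvature (twice the Gaussian curvature). -/
def Surface.scal (S : Surface) (x : S.M) : ℝ := 2 * S.curv x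

/-- The boundary of a surface: points mapped by some chart to `{y = 0}`. -/
def Surface0.boundary (S : Surface0) : Set S.M :=
  {x | ∃ φ ∈ S.charts, x ∈ φ.source ∧ (φ x).2 = 0}

/-- A surface is boundaryless if its boundary is empty. -/
def Surface0.Boundaryless (S : Surface0) : Prop := S.boundary = ∅

/-- Orientability: some subatlas covers the surface and has orientation
preserving (positive Jacobian determinant) transition maps. -/
def Surface0.Orientable (S : Surface0) : Prop :=
  ∃ A ⊆ S.charts, (∀ x : S.M, ∃ φ ∈ A, x ∈ φ.source) ∧
    ∀ φ ∈ A, ∀ ψ ∈ A, ∀ p ∈ φ.target ∩ φ.symm ⁻¹' ψ.source,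
      0 < (jac (ψ ∘ φ.symm) p).det

/-- A curve in a surface that is smooth when read in any chart. -/
def Surface0.SmoothCurve (S : Surface0) (c : ℝ → S.M) : Prop :=
  Continuous c ∧ ∀ t : ℝ, ∀ φ ∈ S.charts, c t ∈ φ.source →
    ContDiffAt ℝ (⊤ : ℕ∞) (fun s => φ (c s)) t

/-- The speed of a curve in a surface, using the distinguished chart. -/
def Surface.speed (S : Surface) (c : ℝ → S.M) (t : ℝ) : ℝ :=
  speedG (S.gM (S.chartAt (c t))) (fun s => S.chartAt (c t) (c s)) t

/-- The Riemannian length of a curve in a surface. -/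
def Surface.length (S : Surface) (c : ℝ → S.M) (a b : ℝ) : ℝ :=
  ∫ t in a..b, S.speed c t

/-- The Riemannian distance on a surface. -/
def Surface.dist (S : Surface) (x y : S.M) : ℝ :=
  sInf {L : ℝ | ∃ c : ℝ → S.M, S.toSurface0.SmoothCurve c ∧ c 0 = x ∧ c 1 = y ∧
    L = S.length c 0 1}

/-- Metric completeness of a Riemannian surface: every Cauchy sequence for the
Riemannian distance converges. -/
def Surface.Complete (S : Surface) : Prop :=
  ∀ u : ℕ → S.M,
    (∀ ε > (0:ℝ), ∃ N : ℕ, ∀ m ≥ N, ∀ n ≥ N, S.dist (u m) (u n) < ε) →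
    ∃ x : S.M, ∀ ε > (0:ℝ), ∃ N : ℕ, ∀ n ≥ N, S.dist (u n) x < ε

/-- A homeomorphism of a surface region to a subset of the plane is smooth if it
and its inverse are smooth when read in all charts. -/
def Surface0.SmoothPH (S : Surface0) (f : PartialHomeomorph S.M Pt) : Prop :=
  (∀ φ ∈ S.charts, ContDiffOn ℝ (⊤ : ℕ∞) (f ∘ φ.symm) (φ.target ∩ φ.symm ⁻¹' f.source)) ∧
  (∀ φ ∈ S.charts, ContDiffOn ℝ (⊤ : ℕ∞) (φ ∘ f.symm) (f.target ∩ f.symm ⁻¹' φ.source))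

/-- The surface region `E` is an asymptotically conical end of cone parameter
`P` and decay rate `ε`: it is diffeomorphic to `ℝ² \ B̄(0,1)`, carrying (the
coordinate expression of) the metric `gE` with
`gE - [dx² + dy² - ((1-P²)/(x²+y²))(x dy - y dx)²] ∈ O₂((x²+y²)^{-ε})`. -/
def Surface.IsConicalEnd (S : Surface) (E : Set S.M) (P ε : ℝ) : Prop :=
  ∃ f : PartialHomeomorph S.M Pt, f.source = E ∧ f.target = ExtSet ∧
    S.toSurface0.SmoothPH f ∧
    ∃ gE : Met, IsMetricOn gE ExtSet ∧
      (∀ φ ∈ S.charts, ∀ p ∈ φ.target ∩ φ.symm ⁻¹' E,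
        S.gM φ p = pullMet (f ∘ φ.symm) gE p) ∧
      IsO2Decay (fun p => gE p - coneMetric P p) ε 1

/-- Likewise, an asymptotically cylindrical end: the model is `dr² + p²dθ²`. -/
def Surface.IsCylindricalEnd (S : Surface) (E : Set S.M) (pc ε : ℝ) : Prop :=
  ∃ f : PartialHomeomorph S.M Pt, f.source = E ∧ f.target = ExtSet ∧
    S.toSurface0.SmoothPH f ∧
    ∃ gE : Met, IsMetricOn gE ExtSet ∧
      (∀ φ ∈ S.charts, ∀ p ∈ φ.target ∩ φ.symm ⁻¹' E,
        S.gM φ p = pullMet (f ∘ φ.symm) gE p) ∧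
      IsO2Decay (fun p => gE p - cylMetric pc p) ε 1

/-- The set of connected components of the complement of `K`. -/
def compsOutside (X : Type) [TopologicalSpace X] (K : Set X) : Set (Set X) :=
  {C | ∃ x ∈ Kᶜ, C = connectedComponentIn Kᶜ x}

/-- A surface is asymptotically conical if outside some compact set it has
finitely many connected components, each an asymptotically conical end. -/
def Surface.AsympConical (S : Surface) : Prop :=
  ∃ K : Set S.M, IsCompact K ∧ K ≠ Set.univ ∧
    (compsOutside S.M K).Finite ∧
    ∀ E ∈ compsOutside S.M K, ∃ P > (0:ℝ), ∃ ε > (0:ℝ), S.IsConicalEnd E P ε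

/-- A surface is asymptotically cylindrical if outside some compact set it has
finitely many connected components, each an asymptotically cylindrical end. -/
def Surface.AsympCylindrical (S : Surface) : Prop :=
  ∃ K : Set S.M, IsCompact K ∧ K ≠ Set.univ ∧
    (compsOutside S.M K).Finite ∧
    ∀ E ∈ compsOutside S.M K, ∃ pc > (0:ℝ), ∃ ε > (0:ℝ), S.IsCylindricalEnd E pc ε

/-- A (noncompact) space has exactly one end. -/
def HasOneEnd (X : Type) [TopologicalSpace X] : Prop :=
  (¬ IsCompact (Set.univ : Set X)) ∧
  ∀ K : Set X, IsCompact K → ∃ K' : Set X, IsCompact K' ∧ K ⊆ K' ∧ IsConnected K'ᶜ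

/-- The components of the complement of `K` with noncompact closure. -/
def unbCompsOutside (X : Type) [TopologicalSpace X] (K : Set X) : Set (Set X) :=
  {C | ∃ x ∈ Kᶜ, C = connectedComponentIn Kᶜ x ∧ ¬ IsCompact (closure C)}

/-- A space has exactly `n` ends. -/
def HasEnds (X : Type) [TopologicalSpace X] (n : ℕ) : Prop :=
  ∃ K : Set X, IsCompact K ∧ ∀ K' : Set X, IsCompact K' → K ⊆ K' →
    (unbCompsOutside X K').ncard = n

/-- The Borel σ-algebra on a surface. -/
instance Surface0.ms (S : Surface0) : MeasurableSpace S.M := borel S.M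

/-- `μ` is the Riemannian measure of the surface `S`: in every chart its
pushforward has density `√(det g)` with respect to Lebesgue measure. -/
def Surface.IsRiemMeasure (S : Surface) (μ : Measure S.M) : Prop :=
  ∀ φ ∈ S.charts, ∀ A : Set Pt, MeasurableSet A → A ⊆ φ.target →
    μ (φ.symm '' A) = ∫⁻ p in A, ENNReal.ofReal (Real.sqrt (S.gM φ p).det)

/-- A diffeomorphism from the surface onto the plane. -/
def Surface0.DiffeoToPlane (S : Surface0) : Prop :=
  ∃ f : S.M ≃ₜ Pt,
    (∀ φ ∈ S.charts, ContDiffOn ℝ (⊤ : ℕ∞) (f ∘ φ.symm) φ.target) ∧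
    (∀ φ ∈ S.charts, ContDiffOn ℝ (⊤ : ℕ∞) (φ ∘ f.symm) (f.symm ⁻¹' φ.source))

/-- An isometry (global diffeomorphism pulling the Euclidean metric back to the
given metric) from the surface onto the Euclidean plane. -/
def Surface.IsometricToPlane (S : Surface) : Prop :=
  ∃ f : S.M ≃ₜ Pt,
    (∀ φ ∈ S.charts, ContDiffOn ℝ (⊤ : ℕ∞) (f ∘ φ.symm) φ.target) ∧
    (∀ φ ∈ S.charts, ContDiffOn ℝ (⊤ : ℕ∞) (φ ∘ f.symm) (f.symm ⁻¹' φ.source)) ∧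
    (∀ φ ∈ S.charts, ∀ p ∈ φ.target,
      S.gM φ p = pullMet (f ∘ φ.symm) (fun _ => (1 : Matrix (Fin 2) (Fin 2) ℝ)) p)

/-- The closed unit disc in the plane (Euclidean). -/
def DiscSet : Set Pt := {p : Pt | rad p ≤ 1}

/-- A diffeomorphism from the surface onto the closed unit disc. -/
def Surface0.DiffeoToDisc (S : Surface0) : Prop :=
  ∃ f : S.M ≃ₜ DiscSet,
    (∀ φ ∈ S.charts, ContDiffOn ℝ (⊤ : ℕ∞) (fun p => ((f (φ.symm p) : Pt))) φ.target) ∧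
    ∃ G : Pt → S.M, (∀ p (hp : p ∈ DiscSet), G p = f.symm ⟨p, hp⟩) ∧
      ∀ φ ∈ S.charts, ContDiffOn ℝ (⊤ : ℕ∞) (fun p => φ (G p)) (DiscSet ∩ G ⁻¹' φ.source)

/-- Euler characteristic via finite simplicial complexes: `χ` is an Euler
characteristic of `X` if `X` is homeomorphic to the space of a finite simplicial
complex with alternating face-count sum `χ`. -/
def HasEulerChar (X : Type) [TopologicalSpace X] (χ : ℤ) : Prop :=
  ∃ (n : ℕ) (K : Geometry.SimplicialComplex ℝ (Fin n → ℝ)) (h : K.faces.Finite),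
    Nonempty (X ≃ₜ K.space) ∧
    χ = ∑ s ∈ h.toFinset, (-1 : ℤ) ^ (s.card - 1)

/-- Points of space `ℝ³`. -/
abbrev Pt3 := Fin 3 → ℝ

/-- The cylinder of radius `r` in `ℝ³`. -/
def CylSet (r : ℝ) : Set Pt3 := {v : Pt3 | (v 0) ^ 2 + (v 1) ^ 2 = r ^ 2}

/-- Pullback of the Euclidean metric of `ℝ³` under a map `F : ℝ² → ℝ³`:
`(F*δ)_{ij} = ∑_k ∂_i F^k ∂_j F^k`. -/
def pull32 (F : Pt → Pt3) : Met := fun p i j =>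
  ∑ k : Fin 3, pd i (fun q => F q k) p * pd j (fun q => F q k) p

/-- An isometry from the surface onto the round cylinder of radius `r` in `ℝ³`
(with its induced, i.e. product, metric). -/
def Surface.IsometricToCylinder (S : Surface) (r : ℝ) : Prop :=
  ∃ f : S.M ≃ₜ CylSet r,
    (∀ φ ∈ S.charts, ∀ k : Fin 3,
      ContDiffOn ℝ (⊤ : ℕ∞) (fun p => ((f (φ.symm p) : Pt3) k)) φ.target) ∧
    (∀ φ ∈ S.charts, ∀ p ∈ φ.target,
      S.gM φ p = pull32 (fun q => (f (φ.symm q) : Pt3)) p)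
/-- The (rescaled) curvature expression of the circle. -/
def circF (c s : ℝ) (G : Fin 2 → Fin 2 → ℝ) (D : Fin 2 → Fin 2 → Fin 2 → ℝ) : ℝ :=
  (G 0 0 * G 1 1 - G 0 1 * G 1 0) - (1 / 2) *
    ((c * G 1 1 - s * G 1 0) *
        ∑ i : Fin 2, ∑ j : Fin 2, (![-s, c] i) * (![-s, c] j) * (D i 0 j + D j 0 i - D 0 i j)
      + (s * G 0 0 - c * G 0 1) *
        ∑ i : Fin 2, ∑ j : Fin 2, (![-s, c] i) * (![-s, c] j) * (D i 1 j + D j 1 i - D 1 i j))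

/-- The cone metric at the point `(c, s)` of the unit circle. -/
def coneG (k c s : ℝ) : Fin 2 → Fin 2 → ℝ :=
  ![![1 - k * s ^ 2, k * c * s], ![k * c * s, 1 - k * c ^ 2]]

/-- The derivatives of the cone metric at the point `(c, s)` of the unit circle. -/
def coneD (k c s : ℝ) : Fin 2 → Fin 2 → Fin 2 → ℝ :=
  ![![![2 * k * c * s ^ 2, k * (s - 2 * c ^ 2 * s)], ![k * (s - 2 * c ^ 2 * s), -2 * k * c * s ^ 2]],
    ![![-2 * k * s * c ^ 2, k * (c - 2 * c * s ^ 2)], ![k * (c - 2 * c * s ^ 2), 2 * k * c ^ 2 * s]]]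

lemma circF_cone (k c s : ℝ) (h : c ^ 2 + s ^ 2 = 1) :
    circF c s (coneG k c s) (coneD k c s) = (1 - k) ^ 2 := by
  have hc : c ^ 2 = 1 - s ^ 2 := by linarith
  have hc3 : c ^ 3 = c * (1 - s ^ 2) := by rw [← hc]; ring
  have hc4 : c ^ 4 = (1 - s ^ 2) ^ 2 := by rw [← hc]; ring
  have hc5 : c ^ 5 = c * (1 - s ^ 2) ^ 2 := by rw [← hc]; ring
  have hc6 : c ^ 6 = (1 - s ^ 2) ^ 3 := by rw [← hc]; ring
  simp [circF, coneG, coneD, Fin.sum_univ_two]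
  ring_nf
  simp only [hc, hc4, hc6]
  ring

lemma circF_near (k : ℝ) (hk : k < 1) : ∃ δ > 0, ∀ c s : ℝ, c ^ 2 + s ^ 2 = 1 →
    ∀ (G : Fin 2 → Fin 2 → ℝ) (D : Fin 2 → Fin 2 → Fin 2 → ℝ),
      (∀ i j, |G i j - coneG k c s i j| < δ) → (∀ l i j, |D l i j - coneD k c s l i j| < δ) →
      0 < circF c s G D := by
  let f : (ℝ × ℝ) × ((Fin 2 → Fin 2 → ℝ) × (Fin 2 → Fin 2 → Fin 2 → ℝ)) → ℝ := fun x =>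
    circF x.1.1 x.1.2 (fun i j => coneG k x.1.1 x.1.2 i j + x.2.1 i j)
      (fun l i j => coneD k x.1.1 x.1.2 l i j + x.2.2 l i j)
  have hf : Continuous f := by
    simp only [f, circF, coneG, coneD, Fin.sum_univ_two, Matrix.cons_val_zero, Matrix.cons_val_one]
    fun_prop
  have hK : IsCompact {x : ℝ × ℝ | x.1 ^ 2 + x.2 ^ 2 = 1} := by
    refine (isCompact_Icc.prod isCompact_Icc : IsCompact
      (Set.Icc (-1 : ℝ) 1 ×ˢ Set.Icc (-1 : ℝ) 1)).of_isClosed_subset ?_ ?_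
    · exact isClosed_eq (by fun_prop) (by fun_prop)
    · rintro ⟨x, y⟩ h
      simp only [Set.mem_ofPred_eq] at h
      simp only [Set.mem_prod, Set.mem_Icc]
      refine ⟨⟨?_, ?_⟩, ?_, ?_⟩ <;> nlinarith [sq_nonneg x, sq_nonneg y]
  obtain ⟨V, W, hV, hW, hKV, h0W, hVW⟩ := generalized_tube_lemma hK
    (isCompact_singleton (x := (0 : (Fin 2 → Fin 2 → ℝ) × (Fin 2 → Fin 2 → Fin 2 → ℝ))))
    (isOpen_Ioi.preimage hf : IsOpen (f ⁻¹' Set.Ioi 0)) (by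
      rintro ⟨⟨c, s⟩, w⟩ ⟨h1, h2⟩
      simp only [Set.mem_singleton_iff] at h2
      subst h2
      have := circF_cone k c s h1
      simp only [Set.mem_preimage, Set.mem_Ioi, f, Prod.fst_zero, Prod.snd_zero, Pi.zero_apply,
        add_zero]
      rw [this]
      have : 0 < 1 - k := by linarith
      positivity)
  obtain ⟨δ, hδ, hb⟩ := Metric.isOpen_iff.1 hW 0 (h0W rfl)
  refine ⟨δ, hδ, fun c s hcs G D hG hD => ?_⟩
  have hmem : ((fun i j => G i j - coneG k c s i j, fun l i j => D l i j - coneD k c s l i j) :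
      (Fin 2 → Fin 2 → ℝ) × (Fin 2 → Fin 2 → Fin 2 → ℝ)) ∈ W := by
    apply hb
    rw [mem_ball_zero_iff, Prod.norm_def, max_lt_iff]
    constructor
    · rw [pi_norm_lt_iff hδ]; intro i
      rw [pi_norm_lt_iff hδ]; intro j
      exact hG i j
    · rw [pi_norm_lt_iff hδ]; intro l
      rw [pi_norm_lt_iff hδ]; intro i
      rw [pi_norm_lt_iff hδ]; intro j
      exact hD l i j
  have := hVW (Set.mk_mem_prod (hKV (show (c, s) ∈ _ from hcs)) hmem)
  simpa [f] using this

lemma vel_circle (R t : ℝ) : vel (circleC R) t = ![-(R * Real.sin t), R * Real.cos t] := by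
  have h1 : deriv (fun s => R * Real.cos s) t = -(R * Real.sin t) := by
    rw [((Real.hasDerivAt_cos t).const_mul R).deriv]; ring
  have h2 : deriv (fun s => R * Real.sin s) t = R * Real.cos t :=
    ((Real.hasDerivAt_sin t).const_mul R).deriv
  simp only [vel, circleC, h1, h2]

lemma dvel_circle (R t : ℝ) (k : Fin 2) : deriv (fun s => vel (circleC R) s k) t =
    ![-(R * Real.cos t), -(R * Real.sin t)] k := by
  simp only [vel_circle]
  fin_cases k
  · simpa using (((Real.hasDerivAt_sin t).const_mul R).neg).deriv
  · have := ((Real.hasDerivAt_cos t).const_mul R).deriv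
    simpa using this

lemma inner_Jrot (g : Met) (p : Pt) (hdet : 0 < (g p).det) (a u : Fin 2 → ℝ) :
    innerG g p a (Jrot g p u) = Real.sqrt (g p).det * (u 0 * a 1 - u 1 * a 0) := by
  have hne := hdet.ne'
  simp only [innerG, Jrot, Fin.sum_univ_two]
  simp only [Matrix.inv_def, Matrix.adjugate_fin_two, Ring.inverse_eq_inv', Matrix.smul_apply,
    smul_eq_mul, Matrix.of_apply, Matrix.cons_val_zero, Matrix.cons_val_one, Matrix.cons_val',
    if_true, one_ne_zero, if_false]
  generalize Real.sqrt (g p).det = S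
  have hd := Matrix.det_fin_two (g p)
  generalize (g p).det = d at *
  generalize g p 0 0 = w at *
  generalize g p 0 1 = x at *
  generalize g p 1 0 = y at *
  generalize g p 1 1 = z at *
  field_simp
  rw [hd]
  ring

lemma geodCurv_circle (g : Met) (R t : ℝ) (hR : 0 < R) (hdet : 0 < (g (circleC R t)).det) :
    geodCurv g (circleC R) t =
      Real.sqrt (g (circleC R t)).det * (R ^ 2 * circF (Real.cos t) (Real.sin t)
        (fun i j => g (circleC R t) i j)
        (fun l i j => R * pd l (fun q => g q i j) (circleC R t)) / (g (circleC R t)).det)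
        / (normG g (circleC R t) (vel (circleC R) t)) ^ 3 := by
  unfold geodCurv
  congr 1
  have hne := hdet.ne'
  rw [inner_Jrot _ _ hdet]
  congr 1
  simp only [accel, christoffel, dvel_circle]
  simp only [vel_circle, Fin.sum_univ_two, circF]
  set p := circleC R t
  simp only [Matrix.inv_def, Matrix.adjugate_fin_two, Ring.inverse_eq_inv', Matrix.smul_apply,
    smul_eq_mul, Matrix.of_apply, Matrix.cons_val_zero, Matrix.cons_val_one, Matrix.cons_val']
  rw [← Matrix.det_fin_two (g p)]
  generalize (g p).det = d at *
  generalize pd 0 (fun q => g q 0 0) p = a1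
  generalize pd 0 (fun q => g q 0 1) p = a2
  generalize pd 0 (fun q => g q 1 0) p = a3
  generalize pd 0 (fun q => g q 1 1) p = a4
  generalize pd 1 (fun q => g q 0 0) p = a5
  generalize pd 1 (fun q => g q 0 1) p = a6
  generalize pd 1 (fun q => g q 1 0) p = a7
  generalize pd 1 (fun q => g q 1 1) p = a8
  generalize g p 0 0 = w at *
  generalize g p 0 1 = x at *
  generalize g p 1 0 = y at *
  generalize g p 1 1 = z at *
  have hcs := Real.sin_sq_add_cos_sq t
  generalize Real.sin t = s at *
  generalize Real.cos t = c at *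
  field_simp
  linear_combination (2 * d) * hcs

lemma pd_zero_eq {f : Pt → ℝ} {x y d : ℝ} (hf : DifferentiableAt ℝ f (x, y))
    (h : HasDerivAt (fun u => f (u, y)) d x) : pd 0 f (x, y) = d := by
  have h1 : HasDerivAt (fun u : ℝ => ((u, y) : Pt)) (1, 0) x :=
    (hasDerivAt_id x).prodMk (hasDerivAt_const x y)
  have h2 := hf.hasFDerivAt.comp_hasDerivAt x h1
  exact h2.unique h

lemma pd_one_eq {f : Pt → ℝ} {x y d : ℝ} (hf : DifferentiableAt ℝ f (x, y))
    (h : HasDerivAt (fun u => f (x, u)) d y) : pd 1 f (x, y) = d := by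
  have h1 : HasDerivAt (fun u : ℝ => ((x, u) : Pt)) (0, 1) y :=
    (hasDerivAt_const y x).prodMk (hasDerivAt_id y)
  have h2 := hf.hasFDerivAt.comp_hasDerivAt y h1
  exact h2.unique h

lemma quot_deriv (m α β γ e x : ℝ) (h : x ^ 2 + e ≠ 0) :
    HasDerivAt (fun u => m + (α * u ^ 2 + β * u + γ) / (u ^ 2 + e))
      (((2 * α * x + β) * (x ^ 2 + e) - (α * x ^ 2 + β * x + γ) * (2 * x)) / (x ^ 2 + e) ^ 2) x := by
  have h1 : HasDerivAt (fun u : ℝ => u ^ 2) (2 * x) x := by simpa using hasDerivAt_pow 2 x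
  have h2 : HasDerivAt (fun u => α * u ^ 2 + β * u + γ) (2 * α * x + β) x := by
    have := ((h1.const_mul α).add ((hasDerivAt_id x).const_mul β)).add_const γ
    refine this.congr_deriv ?_
    ring
  exact (h2.div (h1.add_const e) h).const_add m

lemma coneMetric_differentiableAt (P : ℝ) (p : Pt) (hp : p.1 ^ 2 + p.2 ^ 2 ≠ 0) (i j : Fin 2) :
    DifferentiableAt ℝ (fun q => coneMetric P q i j) p := by
  fin_cases i <;> fin_cases j <;> simp [coneMetric] <;> fun_prop (disch := exact hp)

lemma cone_pd_zero (P x y : ℝ) (hp : x ^ 2 + y ^ 2 ≠ 0) (i j : Fin 2) (m α β γ : ℝ)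
    (h : ∀ u, coneMetric P (u, y) i j = m + (α * u ^ 2 + β * u + γ) / (u ^ 2 + y ^ 2)) :
    pd 0 (fun q => coneMetric P q i j) (x, y) =
    (((2 * α * x + β) * (x ^ 2 + y ^ 2) - (α * x ^ 2 + β * x + γ) * (2 * x))
      / (x ^ 2 + y ^ 2) ^ 2) := by
  apply pd_zero_eq (coneMetric_differentiableAt P _ hp i j)
  exact (quot_deriv m α β γ _ x hp).congr_of_eventuallyEq (Filter.Eventually.of_forall h)

lemma cone_pd_one (P x y : ℝ) (hp : x ^ 2 + y ^ 2 ≠ 0) (i j : Fin 2) (m α β γ : ℝ)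
    (h : ∀ u, coneMetric P (x, u) i j = m + (α * u ^ 2 + β * u + γ) / (u ^ 2 + x ^ 2)) :
    pd 1 (fun q => coneMetric P q i j) (x, y) =
    (((2 * α * y + β) * (y ^ 2 + x ^ 2) - (α * y ^ 2 + β * y + γ) * (2 * y))
      / (y ^ 2 + x ^ 2) ^ 2) := by
  apply pd_one_eq (coneMetric_differentiableAt P _ hp i j)
  exact (quot_deriv m α β γ _ y (by rwa [add_comm])).congr_of_eventuallyEq
    (Filter.Eventually.of_forall h)

lemma circ_sq (R t : ℝ) : (R * Real.cos t) ^ 2 + (R * Real.sin t) ^ 2 = R ^ 2 := by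
  linear_combination R ^ 2 * Real.sin_sq_add_cos_sq t

lemma coneMetric_circle (P : ℝ) (R t : ℝ) (hR : 0 < R) (i j : Fin 2) :
    coneMetric P (circleC R t) i j = coneG (1 - P ^ 2) (Real.cos t) (Real.sin t) i j := by
  have hc := circ_sq R t
  fin_cases i <;> fin_cases j <;> simp [coneMetric, circleC, coneG, hc] <;> field_simp

lemma cone_deriv (P : ℝ) (R t : ℝ) (hR : 0 < R) (l i j : Fin 2) :
    R * pd l (fun q => coneMetric P q i j) (circleC R t) =
      coneD (1 - P ^ 2) (Real.cos t) (Real.sin t) l i j := by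
  have hc := circ_sq R t
  have hp : (R * Real.cos t) ^ 2 + (R * Real.sin t) ^ 2 ≠ 0 := by rw [hc]; positivity
  have hc' : (R * Real.sin t) ^ 2 + (R * Real.cos t) ^ 2 = R ^ 2 := by rw [add_comm, hc]
  have hcs := Real.sin_sq_add_cos_sq t
  unfold circleC
  set x := R * Real.cos t with hx
  set y := R * Real.sin t with hy
  set k := 1 - P ^ 2 with hk
  have e01 : ∀ u v, coneMetric P (u, v) 0 1 = k * u * v / (u ^ 2 + v ^ 2) := fun u v => by
    simp [coneMetric, hk]
  have e10 : ∀ u v, coneMetric P (u, v) 1 0 = k * u * v / (u ^ 2 + v ^ 2) := fun u v => by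
    simp [coneMetric, hk]
  have e00 : ∀ u v, coneMetric P (u, v) 0 0 = 1 - k * v ^ 2 / (u ^ 2 + v ^ 2) := fun u v => by
    simp [coneMetric, hk]
  have e11 : ∀ u v, coneMetric P (u, v) 1 1 = 1 - k * u ^ 2 / (u ^ 2 + v ^ 2) := fun u v => by
    simp [coneMetric, hk]
  have h000 := cone_pd_zero P x y hp 0 0 1 0 0 (-k * y ^ 2) (fun u => by rw [e00]; ring)
  have h001 := cone_pd_zero P x y hp 0 1 0 0 (k * y) 0 (fun u => by rw [e01]; ring)
  have h010 := cone_pd_zero P x y hp 1 0 0 0 (k * y) 0 (fun u => by rw [e10]; ring)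
  have h011 := cone_pd_zero P x y hp 1 1 1 (-k) 0 0 (fun u => by rw [e11]; ring)
  have h100 := cone_pd_one P x y hp 0 0 1 (-k) 0 0
    (fun u => by rw [e00, add_comm (u ^ 2)]; ring)
  have h101 := cone_pd_one P x y hp 0 1 0 0 (k * x) 0
    (fun u => by rw [e01, add_comm (u ^ 2)]; ring)
  have h110 := cone_pd_one P x y hp 1 0 0 0 (k * x) 0
    (fun u => by rw [e10, add_comm (u ^ 2)]; ring)
  have h111 := cone_pd_one P x y hp 1 1 1 0 0 (-k * x ^ 2)
    (fun u => by rw [e11, add_comm (u ^ 2)]; ring)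
  rw [hc] at h000 h001 h010 h011
  rw [hc'] at h100 h101 h110 h111
  fin_cases l <;> fin_cases i <;> fin_cases j <;>
    simp only [Fin.zero_eta, Fin.mk_one, h000, h001, h010, h011, h100, h101, h110, h111, coneD,
      Matrix.cons_val_zero, Matrix.cons_val_one]
  all_goals simp only [hx, hy]
  all_goals
    generalize Real.sin t = s at *
    generalize Real.cos t = c at *
    field_simp
  all_goals try ring1
  · linear_combination 2 * R ^ 2 * k * c * hcs
  · linear_combination 2 * R ^ 2 * k * s * hcs

lemma rad_circle (R t : ℝ) (hR : 0 < R) : rad (circleC R t) = R := by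
  simp only [rad, circleC, circ_sq]
  exact Real.sqrt_sq hR.le

lemma isOpen_ExtSet : IsOpen ExtSet := by
  have : Continuous rad := by unfold rad; fun_prop
  exact isOpen_lt continuous_const this

/-- If `g` on `ℝ² \ B̄(0,1)` is asymptotic to the flat cone metric of
parameter `P > 0` with error in `O₂((x²+y²)^{-ε})`, then there exists `R₀ > 1` such that
for all `R ≥ R₀` the circle of radius `R` (oriented with inward normal toward the
origin) has strictly positive geodesic curvature at every point. -/
theorem circles_positive_geodesic_curvature (g : Met) (P ε : ℝ)
    (hP : 0 < P) (hε : 0 < ε) (hg : IsMetricOn g ExtSet)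
    (hdecay : IsO2Decay (fun p => g p - coneMetric P p) ε 1) :
    ∃ R₀ > (1 : ℝ), ∀ R ≥ R₀, ∀ t : ℝ, 0 < geodCurv g (circleC R) t := by
  obtain ⟨C, hC, hd⟩ := hdecay
  obtain ⟨δ, hδ, hF⟩ := circF_near (1 - P ^ 2) (by have := pow_pos hP 2; linarith)
  have hlim : Tendsto (fun R : ℝ => C * R ^ (-(2 * ε))) atTop (𝓝 (C * 0)) :=
    (tendsto_rpow_neg_atTop (by linarith)).const_mul C
  rw [mul_zero] at hlim
  obtain ⟨R₁, hR₁⟩ := Filter.eventually_atTop.1 (hlim.eventually (gt_mem_nhds hδ))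
  refine ⟨max R₁ 2, lt_of_lt_of_le one_lt_two (le_max_right _ _), fun R hR t => ?_⟩
  have hR1 : R₁ ≤ R := le_trans (le_max_left _ _) hR
  have hR2 : 2 ≤ R := le_trans (le_max_right _ _) hR
  have hR0 : 0 < R := by linarith
  have hrad := rad_circle R t hR0
  have hmem : circleC R t ∈ ExtSet := by
    change 1 < rad _
    rw [hrad]; linarith
  have hsmall := hR₁ R hR1
  obtain ⟨-, hpos⟩ := hg.2 _ hmem
  have hdet := hpos.det_pos
  rw [geodCurv_circle g R t hR0 hdet]
  have hnorm : 0 < normG g (circleC R t) (vel (circleC R) t) := by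
    apply Real.sqrt_pos.2
    have hv : vel (circleC R) t ≠ 0 := by
      rw [vel_circle]
      intro h
      have h0 := congrFun h 0
      have h1 := congrFun h 1
      simp at h0 h1
      have := Real.sin_sq_add_cos_sq t
      rcases h0 with h0 | h0 <;> rcases h1 with h1 | h1 <;> simp_all
    have := hpos.dotProduct_mulVec_pos hv
    refine this.trans_eq ?_
    simp [innerG, dotProduct, Matrix.mulVec, Fin.sum_univ_two]
    ring
  have hFp : 0 < circF (Real.cos t) (Real.sin t)
        (fun i j => g (circleC R t) i j)
        (fun l i j => R * pd l (fun q => g q i j) (circleC R t)) := by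
    apply hF _ _ (Real.cos_sq_add_sin_sq t)
    · intro i j
      rw [← coneMetric_circle P R t hR0]
      have := hd (circleC R t) hmem i j
      rw [hrad] at this
      refine lt_of_le_of_lt ?_ hsmall
      refine le_trans ?_ this
      rw [add_assoc]
      refine le_add_of_nonneg_right ?_
      positivity
    · intro l i j
      have hp : (circleC R t).1 ^ 2 + (circleC R t).2 ^ 2 ≠ 0 := by
        simp only [circleC, circ_sq]; positivity
      have hgd : DifferentiableAt ℝ (fun q => g q i j) (circleC R t) :=
        ((hg.1 i j).contDiffAt (isOpen_ExtSet.mem_nhds hmem)).differentiableAt (by simp)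
      have hsub : pd l (fun q => (g q - coneMetric P q) i j) (circleC R t) =
          pd l (fun q => g q i j) (circleC R t) -
            pd l (fun q => coneMetric P q i j) (circleC R t) := by
        simp only [pd, Matrix.sub_apply]
        rw [fderiv_fun_sub hgd (coneMetric_differentiableAt P _ hp i j)]
        rfl
      rw [← cone_deriv P R t hR0, ← mul_sub, ← hsub, abs_mul, abs_of_pos hR0]
      have := hd (circleC R t) hmem i j
      rw [hrad] at this
      refine lt_of_le_of_lt ?_ hsmall
      refine le_trans ?_ this
      have h1 : |pd l (fun q => (g q - coneMetric P q) i j) (circleC R t)| ≤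
          ∑ k : Fin 2, |pd k (fun q => (g q - coneMetric P q) i j) (circleC R t)| :=
        Finset.single_le_sum (f := fun k =>
          |pd k (fun q => (g q - coneMetric P q) i j) (circleC R t)|)
          (fun _ _ => abs_nonneg _) (Finset.mem_univ l)
      have h2 := mul_le_mul_of_nonneg_left h1 hR0.le
      have h3 : 0 ≤ R ^ 2 * ∑ k : Fin 2, ∑ l : Fin 2,
          |pd2 k l (fun q => (g q - coneMetric P q) i j) (circleC R t)| := by positivity
      have h4 := abs_nonneg ((g (circleC R t) - coneMetric P (circleC R t)) i j)
      linarith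
  have := Real.sqrt_pos.2 hdet
  positivity

end
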